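/- arXiv:2509.16344 — 2 statements merged into one kernel-verified Lean document; each statement's English description precedes it below -/
import Mathlib

section
/- Let $(X,\|\cdot\|)$ be a real or complex normed linear space, and for a subspace $Y\subset X$ and $x\in X$ let $\rho(x,Y)=\inf\{\|x-y\|: y\in Y\}$. Let $n\ge 1$, let $Y_1\subset Y_2\subset\cdots\subset Y_n\subset X$ be a finite system of strictly nested linear subspaces ($Y_k\ne Y_{k+1}$ for $1\le k<n$), let $d_1,\dots,d_n$ be real numbers with $d_n\ge 0$, and let $z\in X$ be an element not belonging to the closure $\overline{Y_n}$. Consider the assertion (L) there exist $x\in X$ and a real number $\lambda\ge 0$ such that $\rho(x,Y_k)=d_k$ for $k=1,\dots,n$, $\|x\|\le d_1+1$, and $x-\lambda z\in Y_n$; moreover $\lambda>0$ if $d_n>0$. (1) If $Y_{k+1}\not\subset\overline{Y_k}$ for $1\le k<n$ (for example, if all $Y_k$ are closed, or if $\overline{Y_k}\subsetneq Y_{k+1}$ for $1\le k<n$) and $d_1>d_2>\cdots>d_n\ge 0$, then (L) holds. (2) If all $Y_k$ are existence subspaces (that is, every $x\in X$ has some $y\in Y_k$ with $\|x-y\|=\rho(x,Y_k)$),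 then (L) holds whenever $d_1\ge d_2\ge\cdots\ge d_n\ge 0$. In particular, this is so if all $Y_k$ are finite-dimensional, or if $X$ is reflexive and all $Y_k$ are closed. -/
/-- `Y` is an existence (proximinal) subspace of `X`: every `x : X` has a best approximation
in `Y`. -/
def IsExistenceSubspace {𝕜 X : Type*} [RCLike 𝕜] [NormedAddCommGroup X] [NormedSpace 𝕜 X]
    (Y : Submodule 𝕜 X) : Prop :=
  ∀ x : X, ∃ y ∈ Y, ‖x - y‖ = Metric.infDist x (Y : Set X)

/-- `X` is reflexive: the canonical embedding into the bidual is onto. -/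
def IsReflexiveSpace (𝕜 X : Type*) [RCLike 𝕜] [NormedAddCommGroup X] [NormedSpace 𝕜 X] : Prop :=
  Function.Surjective (NormedSpace.inclusionInDoubleDual 𝕜 X)

/-- There are `x` and a real `lam ≥ 0` with `ρ(x, Y k) = d k` for all `k`, `‖x‖ ≤ d 0 + 1` and
`x - lam z ∈ Y n`, where `n` is the last index; moreover `lam > 0` whenever `d n > 0`.
(If `d n = 0` and `z` is not in the closure of `Y n`, then `lam = 0` is forced.) -/
def HasLethargyElement {𝕜 X : Type*} [RCLike 𝕜] [NormedAddCommGroup X] [NormedSpace 𝕜 X]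
    {n : ℕ} (Y : Fin (n + 1) → Submodule 𝕜 X) (d : Fin (n + 1) → ℝ) (z : X) : Prop :=
  ∃ (x : X) (lam : ℝ), (∀ k, Metric.infDist x (Y k : Set X) = d k) ∧ ‖x‖ ≤ d 0 + 1 ∧
    x - (lam : 𝕜) • z ∈ Y (Fin.last n) ∧ 0 ≤ lam ∧ (0 < d (Fin.last n) → 0 < lam)

section

variable {𝕜 X : Type*} [RCLike 𝕜] [NormedAddCommGroup X] [NormedSpace 𝕜 X]

theorem Submodule.norm_mkQ_eq_infDist (Y : Submodule 𝕜 X) (x : X) :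
    ‖Y.mkQ x‖ = Metric.infDist x (Y : Set X) :=
  QuotientAddGroup.norm_mk (S := Y.toAddSubgroup) x

theorem Submodule.infDist_add_mem (Y : Submodule 𝕜 X) (x : X) {y : X} (hy : y ∈ Y) :
    Metric.infDist (x + y) (Y : Set X) = Metric.infDist x (Y : Set X) := by
  have h : Y.mkQ y = 0 := by simpa using hy
  rw [← Y.norm_mkQ_eq_infDist, ← Y.norm_mkQ_eq_infDist, map_add, h, add_zero]

theorem Submodule.infDist_smul (Y : Submodule 𝕜 X) (c : 𝕜) (x : X) :
    Metric.infDist (c • x) (Y : Set X) = ‖c‖ * Metric.infDist x (Y : Set X) := by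
  rw [← Y.norm_mkQ_eq_infDist, ← Y.norm_mkQ_eq_infDist, map_smul, norm_smul]

theorem Submodule.infDist_le_norm (Y : Submodule 𝕜 X) (x : X) :
    Metric.infDist x (Y : Set X) ≤ ‖x‖ := by
  simpa using Metric.infDist_le_dist_of_mem (x := x) Y.zero_mem

theorem Submodule.infDist_pos (Y : Submodule 𝕜 X) {x : X} (hx : x ∉ closure (Y : Set X)) :
    0 < Metric.infDist x (Y : Set X) :=
  (Metric.infDist_pos_iff_notMem_closure ⟨0, Y.zero_mem⟩).1 hx

/-- Moving far enough in a direction outside the closure of `Y`, the distance to `Y` takes every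
value above the norm of the starting point. -/
theorem Submodule.exists_infDist_add_smul_eq (Y : Submodule 𝕜 X) {w : X}
    (hw : w ∉ closure (Y : Set X)) (v : X) {r : ℝ} (hr : ‖v‖ ≤ r) :
    ∃ t : ℝ, Metric.infDist (v + (t : 𝕜) • w) (Y : Set X) = r := by
  have hpos := Y.infDist_pos hw
  set δ := Metric.infDist w (Y : Set X) with hδ
  have hr0 : 0 ≤ r := (norm_nonneg v).trans hr
  have hT : 0 ≤ (r + ‖v‖) / δ := by positivity
  have hcont : Continuous fun t : ℝ ↦ Metric.infDist (v + (t : 𝕜) • w) (Y : Set X) :=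
    (Metric.continuous_infDist_pt _).comp (by fun_prop)
  have h0 : Metric.infDist (v + ((0 : ℝ) : 𝕜) • w) (Y : Set X) ≤ r := by
    simpa using (Y.infDist_le_norm v).trans hr
  have h1 : r ≤ Metric.infDist (v + (((r + ‖v‖) / δ : ℝ) : 𝕜) • w) (Y : Set X) := by
    set c : 𝕜 := (((r + ‖v‖) / δ : ℝ) : 𝕜) with hc
    have hsmul : Metric.infDist (c • w) (Y : Set X) = r + ‖v‖ := by
      rw [Y.infDist_smul, hc, RCLike.norm_ofReal, abs_of_nonneg hT, ← hδ]
      field_simp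
    have htri : Metric.infDist (c • w) (Y : Set X) ≤
        Metric.infDist (v + c • w) (Y : Set X) + dist (c • w) (v + c • w) :=
      Metric.infDist_le_infDist_add_dist
    have hdist : dist (c • w) (v + c • w) = ‖v‖ := by simp
    linarith
  obtain ⟨t, -, ht⟩ := intermediate_value_Icc hT hcont.continuousOn ⟨h0, h1⟩
  exact ⟨t, ht⟩

theorem hasLethargyElement_of_exists_norm_sub_le {n : ℕ} {Y : Fin (n + 1) → Submodule 𝕜 X}
    (hmono : Monotone Y) {d : Fin (n + 1) → ℝ} (hd : 0 ≤ d (Fin.last n))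
    {z : X} (hz : z ∉ closure (Y (Fin.last n) : Set X))
    (hY : ∀ k : Fin n, ¬ (Y k.succ : Set X) ⊆ closure (Y k.castSucc : Set X))
    (happrox : ∀ (k : Fin n) (x : X), Metric.infDist x (Y k.succ : Set X) = d k.succ →
      ∃ y ∈ Y k.succ, ‖x - y‖ ≤ d k.castSucc) :
    HasLethargyElement Y d z := by
  have hpos := (Y (Fin.last n)).infDist_pos hz
  set lam : ℝ := d (Fin.last n) / Metric.infDist z (Y (Fin.last n) : Set X) with hlam
  have hlam0 : 0 ≤ lam := by positivity
  have key : ∀ j : Fin (n + 1), ∃ x : X, x - (lam : 𝕜) • z ∈ Y (Fin.last n) ∧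
      ∀ k, j ≤ k → Metric.infDist x (Y k : Set X) = d k := by
    intro j
    induction j using Fin.reverseInduction with
    | last =>
      refine ⟨(lam : 𝕜) • z, by simp, fun k hk ↦ ?_⟩
      obtain rfl : k = Fin.last n := le_antisymm (Fin.le_last k) hk
      rw [Submodule.infDist_smul, RCLike.norm_ofReal, abs_of_nonneg hlam0, hlam]
      field_simp
    | cast j ih =>
      obtain ⟨x, hxz, hx⟩ := ih
      obtain ⟨y, hy, hxy⟩ := happrox j x (hx _ le_rfl)
      obtain ⟨w, hwY, hw⟩ := Set.not_subset.1 (hY j)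
      obtain ⟨t, ht⟩ := (Y j.castSucc).exists_infDist_add_smul_eq hw (x - y) hxy
      have hmem : (t : 𝕜) • w - y ∈ Y j.succ := sub_mem (Submodule.smul_mem _ _ hwY) hy
      have hv : x - y + (t : 𝕜) • w = x + ((t : 𝕜) • w - y) := by abel
      rw [hv] at ht
      refine ⟨x + ((t : 𝕜) • w - y), ?_, fun k hk ↦ ?_⟩
      · rw [add_sub_right_comm]
        exact add_mem hxz (hmono (Fin.le_last _) hmem)
      · rcases hk.eq_or_lt with rfl | hk
        · exact ht
        · have hk' : j.succ ≤ k := Fin.castSucc_lt_iff_succ_le.1 hk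
          rw [(Y k).infDist_add_mem x (hmono hk' hmem), hx k hk']
  obtain ⟨x, hxz, hx⟩ := key 0
  obtain ⟨y, hy, hxy⟩ := (Metric.infDist_lt_iff (s := (Y 0 : Set X)) ⟨0, (Y 0).zero_mem⟩).1
    (by rw [hx 0 le_rfl]; exact lt_add_one (d 0))
  have hmem : ∀ k, -y ∈ Y k := fun k ↦ neg_mem (hmono (Fin.zero_le k) hy)
  refine ⟨x + -y, lam, fun k ↦ ?_, ?_, ?_, hlam0, fun h ↦ by positivity⟩
  · rw [(Y k).infDist_add_mem x (hmem k), hx k (Fin.zero_le k)]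
  · rw [← sub_eq_add_neg, ← dist_eq_norm]
    exact hxy.le
  · rw [add_sub_right_comm]
    exact add_mem hxz (hmem _)

theorem IsExistenceSubspace.isClosed {Y : Submodule 𝕜 X} (hY : IsExistenceSubspace Y) :
    IsClosed (Y : Set X) := by
  refine isClosed_of_closure_subset fun x hx ↦ ?_
  obtain ⟨y, hy, hxy⟩ := hY x
  rw [(Metric.mem_closure_iff_infDist_zero ⟨0, Y.zero_mem⟩).1 hx, norm_eq_zero, sub_eq_zero] at hxy
  exact hxy ▸ hy

theorem isExistenceSubspace_of_forall_exists_norm_sub_le {Y : Submodule 𝕜 X}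
    (h : ∀ x : X, ∃ y ∈ Y, ‖x - y‖ ≤ Metric.infDist x (Y : Set X)) : IsExistenceSubspace Y := by
  intro x
  obtain ⟨y, hy, hxy⟩ := h x
  refine ⟨y, hy, hxy.antisymm ?_⟩
  rw [← dist_eq_norm]
  exact Metric.infDist_le_dist_of_mem hy

theorem isExistenceSubspace_of_finiteDimensional (Y : Submodule 𝕜 X) [FiniteDimensional 𝕜 Y] :
    IsExistenceSubspace Y := by
  refine isExistenceSubspace_of_forall_exists_norm_sub_le fun x ↦ ?_
  have := FiniteDimensional.proper_rclike 𝕜 Y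
  have hlim : Filter.Tendsto (fun y : Y ↦ ‖x - y‖) (Filter.cocompact Y) Filter.atTop := by
    refine Filter.tendsto_atTop_mono (fun y ↦ ?_)
      (Filter.tendsto_atTop_add_const_right _ (-‖x‖) (tendsto_norm_cocompact_atTop (E := Y)))
    have := norm_sub_norm_le (y : X) x
    rw [norm_sub_rev] at this
    simpa [sub_eq_add_neg] using this
  obtain ⟨y, hy⟩ := Continuous.exists_forall_le (f := fun y : Y ↦ ‖x - y‖) (by fun_prop) hlim
  refine ⟨y, y.2, (Metric.le_infDist ⟨0, Y.zero_mem⟩).2 fun {u} hu ↦ ?_⟩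
  rw [dist_eq_norm]
  exact hy ⟨u, hu⟩

/-- A vector killed by every functional vanishing on `Y` lies in the closure of `Y`. -/
theorem Submodule.mem_closure_of_forall_dual_eq_zero (Y : Submodule 𝕜 X) {x : X}
    (h : ∀ f : StrongDual 𝕜 X, (∀ y ∈ Y, f y = 0) → f x = 0) : x ∈ closure (Y : Set X) := by
  by_contra hx
  have hne : ‖Y.mkQ x‖ ≠ 0 := by
    rw [Y.norm_mkQ_eq_infDist]
    exact (Y.infDist_pos hx).ne'
  obtain ⟨g, -, hg⟩ := exists_dual_vector 𝕜 (Y.mkQ x) hne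
  refine hne ?_
  have hgx := h (g ∘L Y.mkQL) fun y hy ↦ by
    have : Y.mkQ y = 0 := by simpa using hy
    change g (Y.mkQ y) = 0
    rw [this, map_zero]
  change g (Y.mkQ x) = 0 at hgx
  rw [hg] at hgx
  exact_mod_cast hgx

theorem StrongDual.exists_eqOn_norm_le (A : Subspace 𝕜 X) (φ : StrongDual 𝕜 X) {r : ℝ}
    (hr : 0 ≤ r) (h : ∀ f ∈ A, ‖φ f‖ ≤ r * ‖f‖) :
    ∃ ψ : StrongDual 𝕜 X, (∀ f ∈ A, ψ f = φ f) ∧ ‖ψ‖ ≤ r := by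
  obtain ⟨ψ, hψ, hnorm⟩ := exists_extension_norm_eq A (φ.comp A.subtypeL)
  refine ⟨ψ, fun f hf ↦ hψ ⟨f, hf⟩, hnorm.trans_le ?_⟩
  exact ContinuousLinearMap.opNorm_le_bound _ hr fun f ↦ h f f.2

theorem IsReflexiveSpace.isExistenceSubspace (hX : IsReflexiveSpace 𝕜 X) {Y : Submodule 𝕜 X}
    (hY : IsClosed (Y : Set X)) : IsExistenceSubspace Y := by
  refine isExistenceSubspace_of_forall_exists_norm_sub_le fun x ↦ ?_
  have hbound : ∀ f ∈ StrongDual.polarSubmodule 𝕜 Y,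
      ‖NormedSpace.inclusionInDoubleDual 𝕜 X x f‖ ≤ Metric.infDist x (Y : Set X) * ‖f‖ := by
    intro f hf
    rw [StrongDual.mem_polarSubmodule] at hf
    rw [NormedSpace.dual_def, mul_comm]
    refine le_of_forall_pos_le_add fun ε hε ↦ ?_
    obtain ⟨y, hy, hxy⟩ := (Metric.infDist_lt_iff (s := (Y : Set X)) ⟨0, Y.zero_mem⟩).1
      (lt_add_of_pos_right (Metric.infDist x (Y : Set X)) (div_pos hε (by positivity : 0 < ‖f‖ + 1)))
    have hfx : f x = f (x - y) := by rw [map_sub, hf y hy, sub_zero]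
    calc ‖f x‖ ≤ ‖f‖ * ‖x - y‖ := hfx ▸ f.le_opNorm (x - y)
      _ ≤ ‖f‖ * (Metric.infDist x (Y : Set X) + ε / (‖f‖ + 1)) := by
        rw [← dist_eq_norm]
        gcongr
      _ = ‖f‖ * Metric.infDist x (Y : Set X) + ε * (‖f‖ / (‖f‖ + 1)) := by ring
      _ ≤ ‖f‖ * Metric.infDist x (Y : Set X) + ε := by
        gcongr
        exact mul_le_of_le_one_right hε.le (div_le_one_of_le₀ (by linarith) (by positivity))
  obtain ⟨φ, hφ, hnorm⟩ := StrongDual.exists_eqOn_norm_le _ _ Metric.infDist_nonneg hbound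
  obtain ⟨u, rfl⟩ := hX φ
  have hu : ‖NormedSpace.inclusionInDoubleDual 𝕜 X u‖ = ‖u‖ :=
    (NormedSpace.inclusionInDoubleDualLi 𝕜 (E := X)).norm_map u
  refine ⟨x - u, ?_, ?_⟩
  · rw [← SetLike.mem_coe, ← hY.closure_eq]
    refine Y.mem_closure_of_forall_dual_eq_zero fun f hf ↦ ?_
    have hfu : f u = f x := hφ f ((StrongDual.mem_polarSubmodule 𝕜 Y f).2 hf)
    rw [map_sub, hfu, sub_self]
  · rwa [sub_sub_cancel, ← hu]

theorem hasLethargyElement_of_isExistenceSubspace {n : ℕ} {Y : Fin (n + 1) → Submodule 𝕜 X}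
    (hY : StrictMono Y) {d : Fin (n + 1) → ℝ} (hd : 0 ≤ d (Fin.last n))
    {z : X} (hz : z ∉ closure (Y (Fin.last n) : Set X))
    (hex : ∀ k, IsExistenceSubspace (Y k)) (hanti : Antitone d) : HasLethargyElement Y d z := by
  refine hasLethargyElement_of_exists_norm_sub_le hY.monotone hd hz (fun k hk ↦ ?_)
    fun k x hx ↦ ?_
  · rw [(hex _).isClosed.closure_eq] at hk
    exact (hY k.castSucc_lt_succ).not_ge hk
  · obtain ⟨y, hy, hxy⟩ := hex k.succ x
    exact ⟨y, hy, (hxy.trans hx).trans_le (hanti k.castSucc_lt_succ.le)⟩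

end

theorem stmt_3 {𝕜 X : Type*} [RCLike 𝕜] [NormedAddCommGroup X] [NormedSpace 𝕜 X]
    (n : ℕ) (Y : Fin (n + 1) → Submodule 𝕜 X)
    (hnested : ∀ k : Fin n, Y k.castSucc < Y k.succ)
    (d : Fin (n + 1) → ℝ) (hd0 : 0 ≤ d (Fin.last n))
    (z : X) (hz : z ∉ closure (Y (Fin.last n) : Set X)) :
    ((∀ k : Fin n, ¬ (Y k.succ : Set X) ⊆ closure (Y k.castSucc : Set X)) →
        StrictAnti d → HasLethargyElement Y d z) ∧
      ((∀ k, IsExistenceSubspace (Y k)) → Antitone d → HasLethargyElement Y d z) ∧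
      ((∀ k, FiniteDimensional 𝕜 (Y k)) → Antitone d → HasLethargyElement Y d z) ∧
      (IsReflexiveSpace 𝕜 X → (∀ k, IsClosed (Y k : Set X)) → Antitone d →
        HasLethargyElement Y d z) := by
  have hmono : StrictMono Y := Fin.strictMono_iff_lt_succ.2 hnested
  refine ⟨fun hY hd ↦ ?_, hasLethargyElement_of_isExistenceSubspace hmono hd0 hz,
    fun hfin ↦ ?_, fun hX hcl ↦ ?_⟩
  · refine hasLethargyElement_of_exists_norm_sub_le hmono.monotone hd0 hz hY fun k x hx ↦ ?_
    obtain ⟨y, hy, hxy⟩ := (Metric.infDist_lt_iff ⟨0, (Y k.succ).zero_mem⟩).1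
      (hx.trans_lt (hd k.castSucc_lt_succ))
    exact ⟨y, hy, dist_eq_norm x y ▸ hxy.le⟩
  · exact hasLethargyElement_of_isExistenceSubspace hmono hd0 hz
      fun k ↦ have := hfin k; isExistenceSubspace_of_finiteDimensional (Y k)
  · exact hasLethargyElement_of_isExistenceSubspace hmono hd0 hz
      fun k ↦ hX.isExistenceSubspace (hcl k)
end

section
/- Let $X$ be a real or complex Banach space. By a nested system in $X$ we mean a strictly increasing sequence $Y_1\subsetneq Y_2\subsetneq\cdots$ of closed subspaces of $X$ whose union $\bigcup_n Y_n$ is dense in $X$. If $X$ is infinite-dimensional, assume that $X$ possesses at least one nested system (this is automatic, for instance, if $X$ is separable). Suppose that $X$ satisfies the property (B): for every nested system $(Y_n)$ in $X$ and for every non-increasing sequence $(d_n)$ of non-negative real numbers converging to $0$, there exists $x\in X$ such that $\rho(x,Y_n)=d_n$ for all $n$, where $\rho(x,Y):=\inf\{\|x-y\|:y\in Y\}$. Then $X$ is reflexive, i.e. the canonical embedding of $X$ into its double dual $X^{**}$ is surjective. -/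
open Filter Metric

/-- A strictly increasing sequence of closed subspaces of `X` whose union is dense in `X`. -/
structure IsNestedSystem (𝕜 : Type*) {X : Type*} [RCLike 𝕜] [NormedAddCommGroup X]
    [NormedSpace 𝕜 X] (Y : ℕ → Submodule 𝕜 X) : Prop where
  isClosed : ∀ n, IsClosed (Y n : Set X)
  lt_succ : ∀ n, Y n < Y (n + 1)
  dense_iUnion : Dense (⋃ n, (Y n : Set X))

/-- Property (B): for every strictly increasing sequence of closed subspaces with dense union, every
non-increasing null sequence of non-negative reals is the sequence of distances of some `x`. -/
def PropertyB (𝕜 X : Type*) [RCLike 𝕜] [NormedAddCommGroup X] [NormedSpace 𝕜 X] : Prop :=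
  ∀ Y : ℕ → Submodule 𝕜 X, IsNestedSystem 𝕜 Y →
    ∀ d : ℕ → ℝ, Antitone d → (∀ n, 0 ≤ d n) → Tendsto d atTop (nhds 0) →
      ∃ x : X, ∀ n, infDist x (Y n : Set X) = d n

theorem finrank_strongDual_eq (𝕜 E : Type*) [RCLike 𝕜] [SeminormedAddCommGroup E]
    [NormedSpace 𝕜 E] [T2Space E] [FiniteDimensional 𝕜 E] :
    Module.finrank 𝕜 (StrongDual 𝕜 E) = Module.finrank 𝕜 E :=
  (LinearMap.toContinuousLinearMap (𝕜 := 𝕜) (E := E) (F' := 𝕜)).finrank_eq.symm.trans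
    Subspace.dual_finrank_eq

theorem surjective_inclusionInDoubleDual_of_finiteDimensional (𝕜 E : Type*) [RCLike 𝕜]
    [NormedAddCommGroup E] [NormedSpace 𝕜 E] [FiniteDimensional 𝕜 E] :
    Function.Surjective (NormedSpace.inclusionInDoubleDual 𝕜 E) :=
  ((NormedSpace.inclusionInDoubleDualLi (E := E) 𝕜).toLinearIsometryEquiv
    ((finrank_strongDual_eq 𝕜 (StrongDual 𝕜 E)).trans
      (finrank_strongDual_eq 𝕜 E)).symm).surjective

/-- **Helly's theorem**: an element of the bidual can be interpolated on finitely many functionals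
by vectors of almost the same norm. -/
theorem exists_norm_lt_forall_apply_eq {𝕜 E ι : Type*} [RCLike 𝕜] [SeminormedAddCommGroup E]
    [NormedSpace 𝕜 E] [Finite ι] (φ : StrongDual 𝕜 (StrongDual 𝕜 E)) (g : ι → StrongDual 𝕜 E)
    {r : ℝ} (hφ : ‖φ‖ < r) : ∃ x : E, ‖x‖ < r ∧ ∀ i, g i x = φ (g i) := by
  have := Fintype.ofFinite ι
  let T : E →L[𝕜] (ι → 𝕜) := ContinuousLinearMap.pi g
  let N : Submodule 𝕜 E := T.toLinearMap.ker
  have hN : IsClosed (N : Set E) := T.isClosed_ker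
  have hfin : FiniteDimensional 𝕜 (E ⧸ N) :=
    T.toLinearMap.quotKerEquivRange.symm.finiteDimensional
  have hle : ∀ i, N ≤ (g i).ker := fun i x hx => congrFun (show T x = 0 from hx) i
  obtain ⟨z, hz⟩ := surjective_inclusionInDoubleDual_of_finiteDimensional 𝕜 (E ⧸ N)
    (φ.comp (ContinuousLinearMap.precomp 𝕜 N.mkQL))
  have hznorm : ‖z‖ < r := by
    refine lt_of_le_of_lt ?_ hφ
    rw [← (NormedSpace.inclusionInDoubleDualLi (E := E ⧸ N) 𝕜).norm_map z]
    refine ContinuousLinearMap.opNorm_le_bound _ (norm_nonneg φ) fun h => ?_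
    change ‖NormedSpace.inclusionInDoubleDual 𝕜 (E ⧸ N) z h‖ ≤ _
    rw [hz]
    refine (φ.le_opNorm _).trans ?_
    gcongr
    refine ContinuousLinearMap.opNorm_le_bound _ (norm_nonneg _) fun x => ?_
    refine (h.le_opNorm _).trans ?_
    gcongr
    exact Submodule.Quotient.norm_mk_le _ x
  obtain ⟨x, hx, hxr⟩ := Submodule.Quotient.norm_mk_lt z (sub_pos.2 hznorm)
  refine ⟨x, by linarith, fun i => ?_⟩
  have h := congrArg (fun Ψ => Ψ (N.liftQL (g i) (hle i))) hz
  rw [← hx] at h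
  exact h

/-- A bounded biorthogonal-type system witnessing non-reflexivity: `f n (x k)` is `θ` for `n ≤ k`
and `0` for `k < n`. -/
structure IsJamesSequence {𝕜 X : Type*} [RCLike 𝕜] [NormedAddCommGroup X] [NormedSpace 𝕜 X]
    (θ : ℝ) (x : ℕ → X) (f : ℕ → StrongDual 𝕜 X) : Prop where
  pos : 0 < θ
  norm_vector_le : ∀ n, ‖x n‖ ≤ 1
  norm_functional_le : ∀ n, ‖f n‖ ≤ 1
  apply_of_le : ∀ n k, n ≤ k → f n (x k) = (θ : 𝕜)
  apply_of_lt : ∀ n k, k < n → f n (x k) = 0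

/-- If the range of a linear isometry is closed and proper, some functional vanishes on the range but
not everywhere. -/
theorem LinearIsometry.exists_dual_eq_zero_of_not_surjective {𝕜 X V : Type*} [RCLike 𝕜]
    [NormedAddCommGroup X] [NormedSpace 𝕜 X] [SeminormedAddCommGroup V]
    [NormedSpace 𝕜 V] (J : X →ₗᵢ[𝕜] V) (hJ : IsClosed (Set.range J))
    (h : ¬ Function.Surjective J) :
    ∃ (G : V) (Φ : StrongDual 𝕜 V) (θ : ℝ), ‖G‖ < 1 ∧ ‖Φ‖ < 1 ∧ 0 < θ ∧ Φ G = (θ : 𝕜) ∧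
      ∀ x, Φ (J x) = 0 := by
  let R : Submodule 𝕜 V := J.toLinearMap.range
  have hR : IsClosed (R : Set V) := hJ
  obtain ⟨G, hG, hG1⟩ : ∃ G : V, G ∉ R ∧ ‖G‖ < 1 := by
    obtain ⟨G, hG⟩ : ∃ G, G ∉ R := by
      by_contra! hc
      exact h hc
    have hpos : 0 < ‖G‖ + 1 := by positivity
    have hne : (((‖G‖ + 1)⁻¹ : ℝ) : 𝕜) ≠ 0 := by
      exact_mod_cast (inv_pos.2 hpos).ne'
    refine ⟨(((‖G‖ + 1)⁻¹ : ℝ) : 𝕜) • G, fun hc => hG ((R.smul_mem_iff hne).1 hc), ?_⟩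
    rw [norm_smul, RCLike.norm_ofReal, abs_of_pos (inv_pos.2 hpos), inv_mul_lt_iff₀ hpos]
    linarith
  have hδ : 0 < ‖R.mkQL G‖ := by
    rw [norm_pos_iff, Submodule.mkQL_apply, Submodule.mkQ_apply, Ne,
      Submodule.Quotient.mk_eq_zero]
    exact hG
  obtain ⟨ψ, hψ1, hψ⟩ := exists_dual_vector 𝕜 (R.mkQL G) hδ.ne'
  refine ⟨G, ((1 / 2 : ℝ) : 𝕜) • ψ.comp R.mkQL, ‖R.mkQL G‖ / 2, hG1, ?_, half_pos hδ, ?_, ?_⟩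
  · refine lt_of_le_of_lt (b := (1 / 2 : ℝ)) ?_ (by norm_num)
    refine ContinuousLinearMap.opNorm_le_bound _ (by norm_num) fun F => ?_
    change ‖((1 / 2 : ℝ) : 𝕜) • ψ (R.mkQL F)‖ ≤ _
    rw [norm_smul, RCLike.norm_ofReal, abs_of_pos (by norm_num)]
    gcongr
    refine (ψ.le_opNorm _).trans ?_
    rw [hψ1, one_mul]
    exact Submodule.Quotient.norm_mk_le _ F
  · change ((1 / 2 : ℝ) : 𝕜) • ψ (R.mkQL G) = _
    rw [hψ, smul_eq_mul]
    push_cast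
    ring
  · intro x
    change ((1 / 2 : ℝ) : 𝕜) • ψ (R.mkQL (J x)) = _
    have : R.mkQL (J x) = 0 := by
      rw [Submodule.mkQL_apply, Submodule.mkQ_apply, Submodule.Quotient.mk_eq_zero]
      exact ⟨x, rfl⟩
    rw [this, map_zero, smul_zero]

theorem exists_isJamesSequence_of_forall_finset {𝕜 X : Type*} [RCLike 𝕜] [NormedAddCommGroup X]
    [NormedSpace 𝕜 X] (G : StrongDual 𝕜 X → 𝕜) {θ : ℝ} (hθ : 0 < θ)
    (hf : ∀ s : Finset X, ∃ f : StrongDual 𝕜 X, ‖f‖ < 1 ∧ G f = (θ : 𝕜) ∧ ∀ x ∈ s, f x = 0)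
    (hx : ∀ s : Finset (StrongDual 𝕜 X), ∃ x : X, ‖x‖ < 1 ∧ ∀ f ∈ s, f x = G f) :
    ∃ (x : ℕ → X) (f : ℕ → StrongDual 𝕜 X), IsJamesSequence θ x f := by
  classical
  obtain ⟨u, hu, hur⟩ := exists_seq_of_forall_finset_exists
    (fun p : StrongDual 𝕜 X × X => ‖p.1‖ ≤ 1 ∧ ‖p.2‖ ≤ 1 ∧ G p.1 = (θ : 𝕜) ∧ p.1 p.2 = (θ : 𝕜))
    (fun p q => q.1 p.2 = 0 ∧ p.1 q.2 = (θ : 𝕜)) (fun s hs => by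
      obtain ⟨f, hf1, hfG, hfx⟩ := hf (s.image Prod.snd)
      obtain ⟨x, hx1, hx⟩ := hx (insert f (s.image Prod.fst))
      exact ⟨(f, x), ⟨hf1.le, hx1.le, hfG, (hx f (Finset.mem_insert_self _ _)).trans hfG⟩,
        fun p hp => ⟨hfx _ (Finset.mem_image_of_mem _ hp),
          (hx _ (Finset.mem_insert_of_mem (Finset.mem_image_of_mem _ hp))).trans
            (hs p hp).2.2.1⟩⟩)
  refine ⟨fun n => (u n).2, fun n => (u n).1, hθ, fun n => (hu n).2.1,
    fun n => (hu n).1, fun n k hnk => ?_, fun n k hkn => (hur k n hkn).1⟩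
  rcases hnk.eq_or_lt with rfl | hlt
  · exact (hu n).2.2.2
  · exact (hur n k hlt).2

theorem LinearIsometry.exists_forall_finset_apply_eq_zero {𝕜 X D : Type*} [RCLike 𝕜]
    [NormedAddCommGroup X] [NormedSpace 𝕜 X] [CompleteSpace X] [SeminormedAddCommGroup D]
    [NormedSpace 𝕜 D] (J : X →ₗᵢ[𝕜] StrongDual 𝕜 D) (h : ¬ Function.Surjective J) :
    ∃ (G : StrongDual 𝕜 D) (θ : ℝ), ‖G‖ < 1 ∧ 0 < θ ∧
      ∀ s : Finset X, ∃ f : D, ‖f‖ < 1 ∧ G f = (θ : 𝕜) ∧ ∀ x ∈ s, J x f = 0 := by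
  obtain ⟨G, Φ, θ, hG1, hΦ1, hθ, hΦG, hΦJ⟩ :=
    J.exists_dual_eq_zero_of_not_surjective
      J.isometry.isUniformInducing.isComplete_range.isClosed h
  refine ⟨G, θ, hG1, hθ, fun s => ?_⟩
  obtain ⟨f, hf1, hf⟩ := exists_norm_lt_forall_apply_eq Φ
    (fun i : Option s => i.elim G fun x => J x) hΦ1
  exact ⟨f, hf1, (hf none).trans hΦG, fun x hx => (hf (some ⟨x, hx⟩)).trans (hΦJ _)⟩

theorem exists_isJamesSequence {𝕜 X : Type*} [RCLike 𝕜] [NormedAddCommGroup X] [NormedSpace 𝕜 X]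
    [CompleteSpace X] (h : ¬ Function.Surjective (NormedSpace.inclusionInDoubleDual 𝕜 X)) :
    ∃ (θ : ℝ) (x : ℕ → X) (f : ℕ → StrongDual 𝕜 X), IsJamesSequence θ x f := by
  obtain ⟨G, θ, hG1, hθ, hG⟩ := LinearIsometry.exists_forall_finset_apply_eq_zero
    (D := StrongDual 𝕜 X) (NormedSpace.inclusionInDoubleDualLi (E := X) 𝕜) h
  refine ⟨θ, exists_isJamesSequence_of_forall_finset G hθ hG (fun s => ?_)⟩
  obtain ⟨x, hx1, hx⟩ := exists_norm_lt_forall_apply_eq G (fun i : s => (i : StrongDual 𝕜 X)) hG1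
  exact ⟨x, hx1, fun f hf => hx ⟨f, hf⟩⟩

/-- James' convexity argument: for a decreasing sequence of bounded convex sets that stay away from
`0` there is a limit `u` of "dyadic" convex combinations whose partial sums `p n` have norm
considerably smaller than `‖u‖`. -/
theorem exists_dyadic_combination {E : Type*} [NormedAddCommGroup E] [NormedSpace ℝ E]
    [CompleteSpace E] {K : ℕ → Set E} (hanti : Antitone K) (hconv : ∀ n, Convex ℝ (K n))
    (hne : ∀ n, (K n).Nonempty) (hbdd : ∀ g ∈ K 0, ‖g‖ ≤ 1) {θ : ℝ} (hθ : 0 < θ)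
    (hlow : ∀ g ∈ K 0, θ ≤ ‖g‖) :
    ∃ (u : E) (p : ℕ → E), θ ≤ ‖u‖ ∧ (∀ n, ‖p n‖ < ‖u‖ * (1 - (1 / 2) ^ n / 2)) ∧
      ∀ n, u ∈ closure ((fun g => p n + ((1 / 2 : ℝ) ^ n) • g) '' K n) := by
  have hex : ∀ (n : ℕ) (q : E), ∃ g ∈ K n, ∀ g' ∈ K n,
      ‖q + ((1 / 2 : ℝ) ^ n) • g‖ ≤ ‖q + ((1 / 2 : ℝ) ^ n) • g'‖ + θ * ((1 / 4) ^ n / 4) := by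
    intro n q
    let S : Set ℝ := (fun g => ‖q + ((1 / 2 : ℝ) ^ n) • g‖) '' K n
    have hSne : S.Nonempty := (hne n).image _
    have hSb : BddBelow S := ⟨0, by rintro _ ⟨g, -, rfl⟩; exact norm_nonneg _⟩
    obtain ⟨_, ⟨g, hg, rfl⟩, hlt⟩ := Real.lt_sInf_add_pos hSne
      (show 0 < θ * ((1 / 4 : ℝ) ^ n / 4) by positivity)
    refine ⟨g, hg, fun g' hg' => hlt.le.trans ?_⟩
    gcongr
    exact csInf_le hSb ⟨g', hg', rfl⟩
  choose γ hγK hγ using hex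
  let p : ℕ → E := fun n => Nat.rec 0 (fun n q => q + ((1 / 2 : ℝ) ^ (n + 1)) • γ n q) n
  have hp0 : p 0 = 0 := rfl
  have hps : ∀ n, p (n + 1) = p n + ((1 / 2 : ℝ) ^ (n + 1)) • γ n (p n) := fun n => rfl
  let A : ℕ → Set E := fun n => (fun g => p n + ((1 / 2 : ℝ) ^ n) • g) '' K n
  have hA : Antitone A := by
    refine antitone_nat_of_succ_le fun n => ?_
    rintro _ ⟨g, hg, rfl⟩
    refine ⟨(1 / 2 : ℝ) • γ n (p n) + (1 / 2 : ℝ) • g,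
      hconv n (hγK n _) (hanti n.le_succ hg) (by norm_num) (by norm_num) (by norm_num), ?_⟩
    simp only [hps, smul_add, smul_smul, pow_succ, add_assoc]
  let w : ℕ → E := fun n => p n + ((1 / 2 : ℝ) ^ n) • γ n (p n)
  have hwA : ∀ n, w n ∈ A n := fun n => ⟨_, hγK n _, rfl⟩
  have hγ1 : ∀ n q, ‖γ n q‖ ≤ 1 := fun n q => hbdd _ (hanti n.zero_le (hγK n q))
  have hpow : Tendsto (fun n : ℕ => (1 / 2 : ℝ) ^ n) atTop (nhds 0) :=
    tendsto_pow_atTop_nhds_zero_of_lt_one (by norm_num) (by norm_num)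
  obtain ⟨u, hu⟩ : ∃ u, Tendsto p atTop (nhds u) := by
    refine cauchySeq_tendsto_of_complete (cauchySeq_of_le_geometric (1 / 2) 1 (by norm_num) ?_)
    intro n
    rw [hps, dist_self_add_right, norm_smul, norm_pow, pow_succ]
    have h2 : ‖(1 / 2 : ℝ)‖ = 1 / 2 := by norm_num
    rw [h2]
    have h3 : (0 : ℝ) < (1 / 2) ^ n := by positivity
    nlinarith [hγ1 n (p n), norm_nonneg (γ n (p n))]
  have hw : Tendsto w atTop (nhds u) := by
    have h0 : Tendsto (fun n => ((1 / 2 : ℝ) ^ n) • γ n (p n)) atTop (nhds 0) := by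
      refine squeeze_zero_norm (fun n => ?_) hpow
      rw [norm_smul, Real.norm_of_nonneg (by positivity)]
      exact mul_le_of_le_one_right (by positivity) (hγ1 _ _)
    have h1 := hu.add h0
    rwa [add_zero] at h1
  have huA : ∀ n, u ∈ closure (A n) := fun n =>
    mem_closure_of_tendsto hw ((eventually_ge_atTop n).mono fun m hm => hA hm (hwA m))
  have hge : ∀ n, ‖w n‖ ≤ ‖u‖ + θ * ((1 / 4) ^ n / 4) := by
    intro n
    have hcl : IsClosed {v : E | ‖w n‖ ≤ ‖v‖ + θ * ((1 / 4) ^ n / 4)} :=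
      isClosed_le continuous_const (by fun_prop)
    refine closure_minimal ?_ hcl (huA n)
    rintro _ ⟨g, hg, rfl⟩
    exact hγ n (p n) g hg
  have hθu : θ ≤ ‖u‖ := by
    have hcl : IsClosed {v : E | θ ≤ ‖v‖} := isClosed_le continuous_const (by fun_prop)
    refine closure_minimal ?_ hcl (huA 0)
    rintro _ ⟨g, hg, rfl⟩
    simpa [hp0] using hlow g hg
  refine ⟨u, p, hθu, fun n => ?_, huA⟩
  have key : ∀ n, ‖p n‖ ≤ ‖u‖ * (1 - (1 / 2) ^ n / 2 - (1 / 4) ^ n / 2) := by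
    intro n
    induction n with
    | zero => simp [hp0]; norm_num
    | succ n ih =>
      have hmid : p (n + 1) = (1 / 2 : ℝ) • (p n + w n) := by
        simp only [hps, w, smul_add, smul_smul, pow_succ]
        rw [← add_assoc, ← add_smul, mul_comm]
        norm_num
      have h4 : (1 / 4 : ℝ) ^ n > 0 := by positivity
      have hn : ‖p (n + 1)‖ ≤ 1 / 2 * (‖p n‖ + ‖w n‖) := by
        rw [hmid, norm_smul, Real.norm_of_nonneg (by norm_num)]
        gcongr
        exact norm_add_le _ _
      have h5 : θ * ((1 / 4) ^ n / 4) ≤ ‖u‖ * ((1 / 4) ^ n / 4) := by gcongr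
      have h6 := hge n
      rw [pow_succ, pow_succ]
      nlinarith
  refine (key n).trans_lt ?_
  have hupos : 0 < ‖u‖ := hθ.trans_le hθu
  have h4 : (0 : ℝ) < (1 / 4) ^ n := by positivity
  nlinarith [mul_pos hupos h4]

section JamesSequence

variable {𝕜 X : Type*} [RCLike 𝕜] [NormedAddCommGroup X] [NormedSpace 𝕜 X] {θ : ℝ} {x : ℕ → X}
  {f : ℕ → StrongDual 𝕜 X}

theorem IsJamesSequence.eventually_apply_eq_zero (h : IsJamesSequence θ x f) {y : X}
    (hy : y ∈ Submodule.span 𝕜 (Set.range x)) : ∀ᶠ n in atTop, f n y = 0 := by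
  induction hy using Submodule.span_induction with
  | mem y hy =>
    obtain ⟨k, rfl⟩ := hy
    exact (eventually_gt_atTop k).mono fun n hn => h.apply_of_lt n k hn
  | zero => simp
  | add y z _ _ hy hz =>
    filter_upwards [hy, hz] with n h1 h2
    rw [map_add, h1, h2, add_zero]
  | smul c y _ hy =>
    filter_upwards [hy] with n h1
    rw [map_smul, h1, smul_zero]

theorem IsJamesSequence.eventually_norm_apply_le (h : IsJamesSequence θ x f) {z : X}
    (hz : z ∈ (Submodule.span 𝕜 (Set.range x)).topologicalClosure) {ε : ℝ} (hε : 0 < ε) :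
    ∀ᶠ n in atTop, ‖f n z‖ ≤ ε := by
  obtain ⟨y, hy, hzy⟩ := Metric.mem_closure_iff.1 hz ε hε
  filter_upwards [h.eventually_apply_eq_zero hy] with n hn
  calc ‖f n z‖ = ‖f n (z - y)‖ := by rw [map_sub, hn, sub_zero]
    _ ≤ ‖f n‖ * ‖z - y‖ := (f n).le_opNorm _
    _ ≤ 1 * ‖z - y‖ := by gcongr; exact h.norm_functional_le n
    _ ≤ ε := by rw [one_mul, ← dist_eq_norm]; exact hzy.le

/-- The closed span of the vectors of a James sequence carries a functional that does not attain its
norm. -/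
theorem IsJamesSequence.exists_forall_norm_apply_lt (h : IsJamesSequence θ x f) :
    ∃ u : StrongDual 𝕜 (Submodule.span 𝕜 (Set.range x)).topologicalClosure,
      u ≠ 0 ∧ ∀ z, z ≠ 0 → ‖u z‖ < ‖u‖ * ‖z‖ := by
  set C := (Submodule.span 𝕜 (Set.range x)).topologicalClosure with hC
  let g : ℕ → StrongDual 𝕜 C := fun n => (f n).comp C.subtypeL
  let K : ℕ → Set (StrongDual 𝕜 C) := fun n => convexHull ℝ (g '' Set.Ici n)
  have hxC : ∀ n, x n ∈ C := fun n =>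
    Submodule.le_topologicalClosure _ (Submodule.subset_span ⟨n, rfl⟩)
  have hg1 : ∀ n, ‖g n‖ ≤ 1 := fun n =>
    ContinuousLinearMap.opNorm_le_bound _ zero_le_one fun z => by
      refine ((f n).le_opNorm _).trans ?_
      gcongr
      · exact h.norm_functional_le n
      · exact le_rfl
  have hbdd : ∀ v ∈ K 0, ‖v‖ ≤ 1 := by
    intro v hv
    have : K 0 ⊆ closedBall 0 1 := convexHull_min (by
      rintro _ ⟨n, -, rfl⟩
      simpa using hg1 n) (convex_closedBall _ _)
    simpa using this hv
  have hlow : ∀ v ∈ K 0, θ ≤ ‖v‖ := by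
    intro v hv
    have hsub : K 0 ⊆ {v | ∀ᶠ k in atTop, v ⟨x k, hxC k⟩ = (θ : 𝕜)} := by
      refine convexHull_min ?_ ?_
      · rintro _ ⟨n, -, rfl⟩
        exact (eventually_ge_atTop n).mono fun k hk => h.apply_of_le n k hk
      · intro v hv w hw a b _ _ hab
        filter_upwards [hv, hw] with k h1 h2
        change a • v _ + b • w _ = _
        rw [h1, h2, ← add_smul, hab, one_smul]
    obtain ⟨k, hk⟩ := (hsub hv).exists
    have h1 := v.le_opNorm ⟨x k, hxC k⟩
    rw [hk, RCLike.norm_ofReal, abs_of_pos h.pos] at h1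
    refine h1.trans (mul_le_of_le_one_right (norm_nonneg _) ?_)
    exact h.norm_vector_le k
  obtain ⟨u, p, hu, hp, hup⟩ := exists_dyadic_combination (K := K)
    (fun m n hmn => convexHull_mono (Set.image_mono (Set.Ici_subset_Ici.2 hmn)))
    (fun n => convex_convexHull _ _)
    (fun n => ⟨g n, subset_convexHull _ _ ⟨n, Set.self_mem_Ici, rfl⟩⟩) hbdd h.pos hlow
  have hupos : 0 < ‖u‖ := h.pos.trans_le hu
  refine ⟨u, norm_pos_iff.1 hupos, fun z hz => ?_⟩
  have hzpos : 0 < ‖z‖ := norm_pos_iff.2 hz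
  obtain ⟨n, hn⟩ := eventually_atTop.1
    (h.eventually_norm_apply_le z.2 (ε := ‖u‖ * ‖z‖ / 2) (by positivity))
  have hK : ∀ v ∈ K n, ‖v z‖ ≤ ‖u‖ * ‖z‖ / 2 := by
    have hsub : K n ⊆ {v | ‖v z‖ ≤ ‖u‖ * ‖z‖ / 2} := by
      refine convexHull_min ?_ ?_
      · rintro _ ⟨m, hm, rfl⟩
        exact hn m hm
      · intro v hv w hw a b ha hb hab
        have h1 := convex_closedBall (0 : 𝕜) (‖u‖ * ‖z‖ / 2)
          (mem_closedBall_zero_iff.2 hv) (mem_closedBall_zero_iff.2 hw) ha hb hab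
        exact mem_closedBall_zero_iff.1 h1
    exact fun v hv => hsub hv
  have hdiff : ‖(u - p n) z‖ ≤ (1 / 2) ^ n * (‖u‖ * ‖z‖ / 2) := by
    have hcl : IsClosed {v : StrongDual 𝕜 C | ‖(v - p n) z‖ ≤ (1 / 2) ^ n * (‖u‖ * ‖z‖ / 2)} :=
      isClosed_le (continuous_norm.comp
        ((ContinuousLinearMap.apply 𝕜 𝕜 z).continuous.comp (continuous_id.sub continuous_const)))
        continuous_const
    refine closure_minimal ?_ hcl (hup n)
    rintro _ ⟨v, hv, rfl⟩
    change ‖(p n + ((1 / 2 : ℝ) ^ n) • v - p n) z‖ ≤ _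
    rw [add_sub_cancel_left, smul_apply, norm_smul,
      Real.norm_of_nonneg (by positivity)]
    gcongr
    exact hK v hv
  have h1 : ‖u z‖ ≤ ‖p n z‖ + ‖(u - p n) z‖ := by
    rw [show u z = p n z + (u - p n) z by simp]
    exact norm_add_le _ _
  have h2 := (p n).le_opNorm z
  have h3 := mul_lt_mul_of_pos_right (hp n) hzpos
  nlinarith

end JamesSequence

section NestedSystem

variable {𝕜 X : Type*} [RCLike 𝕜] [NormedAddCommGroup X] [NormedSpace 𝕜 X]

theorem Submodule.infDist_bot (x : X) : infDist x ((⊥ : Submodule 𝕜 X) : Set X) = ‖x‖ := by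
  rw [Submodule.bot_coe, infDist_singleton, dist_zero_right]

/-- Under property (B), every functional on a closed subspace contained in all members of a nested
system attains its norm. -/
theorem PropertyB.exists_norm_apply_eq (hB : PropertyB 𝕜 X) {Y : ℕ → Submodule 𝕜 X}
    (hY : IsNestedSystem 𝕜 Y) {C : Submodule 𝕜 X} (hC : IsClosed (C : Set X)) (hCY : C ≤ Y 0)
    {u : StrongDual 𝕜 C} (hu : u ≠ 0) : ∃ z : C, z ≠ 0 ∧ ‖u z‖ = ‖u‖ * ‖z‖ := by
  by_contra! hne
  have hlt : ∀ z : C, z ≠ 0 → ‖u z‖ < ‖u‖ * ‖z‖ := fun z hz =>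
    lt_of_le_of_ne (u.le_opNorm z) (hne z hz)
  obtain ⟨e, he⟩ : ∃ e, u e ≠ 0 := by
    by_contra! hc
    exact hu (ContinuousLinearMap.ext hc)
  have he0 : e ≠ 0 := fun hc => he (by rw [hc, map_zero])
  have hbig : ∀ z : C, z ≠ 0 → ∃ y : C, ‖u z‖ * ‖y‖ < ‖u y‖ * ‖z‖ := by
    intro z hz
    have hz' : 0 < ‖z‖ := norm_pos_iff.2 hz
    by_contra! hc
    refine (hlt z hz).not_ge ?_
    rw [← le_div_iff₀ hz']
    refine ContinuousLinearMap.opNorm_le_bound _ (by positivity) fun y => ?_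
    rw [div_mul_eq_mul_div, le_div_iff₀ hz']
    exact hc y
  let N : Submodule 𝕜 X := u.ker.map C.subtype
  have hNmem : ∀ z : C, u z = 0 → (z : X) ∈ N := fun z hz => ⟨z, hz, rfl⟩
  have hN : IsClosed (N : Set X) := by
    have : (N : Set X) = (fun z : C => (z : X)) '' (u.ker : Set C) := rfl
    rw [this]
    exact hC.isClosedEmbedding_subtypeVal.isClosedMap _ u.isClosed_ker
  have hNC : N < C := by
    refine lt_of_le_of_ne (Submodule.map_subtype_le _ _) fun hc => he ?_
    obtain ⟨z, hz, hze⟩ : (e : X) ∈ N := hc.ge e.2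
    have hze' : z = e := Subtype.ext hze
    exact hze' ▸ hz
  have hN0 : ⊥ < N := by
    rw [bot_lt_iff_ne_bot]
    intro hc
    obtain ⟨y, hy⟩ := hbig e he0
    have hmem : ((y - (u y / u e) • e : C) : X) ∈ N := by
      refine hNmem _ ?_
      rw [map_sub, map_smul, smul_eq_mul, div_mul_cancel₀ _ he, sub_self]
    rw [hc, Submodule.mem_bot, Submodule.coe_eq_zero, sub_eq_zero] at hmem
    rw [hmem, map_smul, norm_smul, norm_smul] at hy
    exact hy.ne (by ring)
  let Y' : ℕ → Submodule 𝕜 X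
    | 0 => ⊥
    | 1 => N
    | 2 => C
    | n + 3 => Y (n + 1)
  have hY' : IsNestedSystem 𝕜 Y' := by
    refine ⟨fun n => ?_, fun n => ?_, ?_⟩
    · match n with
      | 0 => exact isClosed_singleton
      | 1 => exact hN
      | 2 => exact hC
      | n + 3 => exact hY.isClosed _
    · match n with
      | 0 => exact hN0
      | 1 => exact hNC
      | 2 => exact hCY.trans_lt (hY.lt_succ 0)
      | n + 3 => exact hY.lt_succ _
    · refine hY.dense_iUnion.mono (Set.iUnion_subset fun n => ?_)
      refine Set.Subset.trans ?_ (Set.subset_iUnion _ (n + 3))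
      exact (hY.lt_succ n).le
  let d : ℕ → ℝ
    | 0 => 1
    | 1 => 1
    | _ + 2 => 0
  obtain ⟨z, hz⟩ := hB Y' hY' d
    (antitone_nat_of_succ_le fun n => by
      match n with
      | 0 => exact le_rfl
      | 1 => exact zero_le_one
      | n + 2 => exact le_rfl)
    (fun n => by
      match n with
      | 0 => exact zero_le_one
      | 1 => exact zero_le_one
      | n + 2 => exact le_rfl)
    (tendsto_const_nhds.congr' ((eventually_ge_atTop 2).mono fun n hn => by
      obtain ⟨m, rfl⟩ := Nat.exists_eq_add_of_le' hn
      rfl))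
  have hz0 : ‖z‖ = 1 := (Submodule.infDist_bot (𝕜 := 𝕜) z).symm.trans (hz 0)
  have hz1 : infDist z (N : Set X) = 1 := hz 1
  have hzC : z ∈ C := (hC.mem_iff_infDist_zero ⟨0, C.zero_mem⟩).2 (hz 2)
  lift z to C using hzC
  have hzne : z ≠ 0 := fun hc => by simp [hc] at hz0
  obtain ⟨y, hy⟩ := hbig z hzne
  rw [show ‖z‖ = 1 from hz0, mul_one] at hy
  have huy : 0 < ‖u y‖ := lt_of_le_of_lt (by positivity) hy
  have hmem : ((z - (u z / u y) • y : C) : X) ∈ N := by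
    refine hNmem _ ?_
    rw [map_sub, map_smul, smul_eq_mul, div_mul_cancel₀ _ (norm_pos_iff.1 huy), sub_self]
  have hle := infDist_le_dist_of_mem (x := (z : X)) hmem
  rw [hz1, dist_eq_norm, Submodule.coe_sub, sub_sub_cancel, Submodule.coe_smul, norm_smul, norm_div,
    div_mul_eq_mul_div, le_div_iff₀ huy, one_mul] at hle
  exact hle.not_gt hy

theorem PropertyB.false_of_isJamesSequence (hB : PropertyB 𝕜 X) {θ : ℝ} {x : ℕ → X}
    {f : ℕ → StrongDual 𝕜 X} (h : IsJamesSequence θ x f) {Y : ℕ → Submodule 𝕜 X}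
    (hY : IsNestedSystem 𝕜 Y) (hxY : ∀ n, x n ∈ Y 0) : False := by
  obtain ⟨u, hu, hlt⟩ := h.exists_forall_norm_apply_lt
  obtain ⟨z, hz, heq⟩ := hB.exists_norm_apply_eq hY (Submodule.isClosed_topologicalClosure _)
    (Submodule.topologicalClosure_minimal _ (Submodule.span_le.2 (Set.range_subset_iff.2 hxY))
      (hY.isClosed 0)) hu
  exact (hlt z hz).ne heq

/-- A monotone sequence of proper closed subspaces with dense union has a nested subsequence. -/
theorem exists_isNestedSystem_of_monotone {W : ℕ → Submodule 𝕜 X} (hmono : Monotone W)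
    (hclosed : ∀ n, IsClosed (W n : Set X)) (hne : ∀ n, W n ≠ ⊤)
    (hdense : Dense (⋃ n, (W n : Set X))) :
    ∃ φ : ℕ → ℕ, IsNestedSystem 𝕜 (W ∘ φ) := by
  have hex : ∀ n, ∃ m, n < m ∧ W n < W m := by
    intro n
    by_contra! hc
    refine hne n (SetLike.coe_injective ?_)
    rw [Submodule.top_coe, ← (hdense.mono (Set.iUnion_subset fun m => ?_)).closure_eq,
      (hclosed n).closure_eq]
    rcases le_or_gt m n with hm | hm
    · exact hmono hm
    · have h1 : W n ≤ W m := hmono hm.le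
      exact (h1.eq_of_not_lt (hc m hm)).ge
  choose next hnext hlt using hex
  let φ : ℕ → ℕ := fun n => next^[n] 0
  have hφ : ∀ n, φ (n + 1) = next (φ n) := fun n => Function.iterate_succ_apply' _ _ _
  have hφm : StrictMono φ := strictMono_nat_of_lt_succ fun n => by rw [hφ]; exact hnext _
  refine ⟨φ, fun n => hclosed _, fun n => ?_, hdense.mono (Set.iUnion_subset fun n => ?_)⟩
  · simp only [Function.comp, hφ]
    exact hlt _
  · exact Set.Subset.trans (hmono hφm.le_apply) (Set.subset_iUnion (fun n => ((W ∘ φ) n : Set X)) n)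

theorem PropertyB.quotient (hB : PropertyB 𝕜 X) (Z : Submodule 𝕜 X) [hZ : IsClosed (Z : Set X)] :
    PropertyB 𝕜 (X ⧸ Z) := by
  intro Y hY d hd hd0 hdt
  obtain ⟨x, hx⟩ := hB (fun n => (Y n).comap Z.mkQ)
    ⟨fun n => (hY.isClosed n).preimage Z.mkQL.continuous,
      fun n => (Submodule.comap_lt_comap_iff_of_surjective Z.mkQ_surjective).2 (hY.lt_succ n),
      by
        have h1 := hY.dense_iUnion.preimage Z.isOpenQuotientMap_mkQL.isOpenMap
        rwa [Set.preimage_iUnion] at h1⟩ d hd hd0 hdt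
  refine ⟨Z.mkQ x, fun n => ?_⟩
  rw [← hx n]
  have hne : ((Y n : Set (X ⧸ Z))).Nonempty := ⟨0, (Y n).zero_mem⟩
  have hne' : (((Y n).comap Z.mkQ : Submodule 𝕜 X) : Set X).Nonempty := ⟨0, Submodule.zero_mem _⟩
  refine le_antisymm ((le_infDist hne').2 fun y hy => ?_) ((le_infDist hne).2 fun y hy => ?_)
  · refine (infDist_le_dist_of_mem (show Z.mkQ y ∈ (Y n : Set (X ⧸ Z)) from hy)).trans ?_
    rw [dist_eq_norm, dist_eq_norm, ← map_sub]
    exact Submodule.Quotient.norm_mk_le _ _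
  · obtain ⟨y, rfl⟩ := Z.mkQ_surjective y
    refine le_of_forall_pos_lt_add fun ε hε => ?_
    obtain ⟨v, hv, hvlt⟩ := Submodule.Quotient.norm_mk_lt (Z.mkQ x - Z.mkQ y) hε
    rw [dist_eq_norm]
    refine lt_of_le_of_lt ?_ hvlt
    have hmem : x - v ∈ (((Y n).comap Z.mkQ : Submodule 𝕜 X) : Set X) := by
      change Z.mkQ (x - v) ∈ Y n
      rw [map_sub, show Z.mkQ v = Z.mkQ x - Z.mkQ y from hv, sub_sub_cancel]
      exact hy
    simpa [dist_eq_norm] using infDist_le_dist_of_mem (x := x) hmem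

end NestedSystem

/-- Reflexivity is a three-space property. -/
theorem surjective_inclusionInDoubleDual_of_quotient {𝕜 X : Type*} [RCLike 𝕜]
    [NormedAddCommGroup X] [NormedSpace 𝕜 X] (Z : Submodule 𝕜 X) [IsClosed (Z : Set X)]
    (hZ : Function.Surjective (NormedSpace.inclusionInDoubleDual 𝕜 Z))
    (hQ : Function.Surjective (NormedSpace.inclusionInDoubleDual 𝕜 (X ⧸ Z))) :
    Function.Surjective (NormedSpace.inclusionInDoubleDual 𝕜 X) := by
  intro φ
  obtain ⟨q, hq⟩ := hQ (φ.comp (ContinuousLinearMap.precomp 𝕜 Z.mkQL))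
  obtain ⟨x₀, rfl⟩ := Z.mkQ_surjective q
  have hφ : ∀ f : StrongDual 𝕜 X, (∀ z : Z, f z = 0) → φ f = f x₀ := fun f hf => by
    have h1 := congrArg (fun Ψ => Ψ (Z.liftQL f fun z hz => hf ⟨z, hz⟩)) hq
    exact h1.symm
  have hext : ∀ f g : StrongDual 𝕜 X, (∀ z : Z, f z = g z) → φ f - f x₀ = φ g - g x₀ :=
    fun f g hfg => by
      have h1 := hφ (f - g) fun z => by rw [sub_apply, hfg, sub_self]
      rw [map_sub, sub_apply] at h1
      linear_combination h1
  choose ext hext_apply hext_norm using fun f : StrongDual 𝕜 Z => exists_extension_norm_eq Z f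
  let χ : StrongDual 𝕜 Z →ₗ[𝕜] 𝕜 :=
    { toFun := fun f => φ (ext f) - ext f x₀
      map_add' := fun f g => by
        rw [hext (ext (f + g)) (ext f + ext g) fun z => by
          simp only [add_apply, hext_apply]]
        rw [map_add, add_apply]
        ring
      map_smul' := fun c f => by
        rw [hext (ext (c • f)) (c • ext f) fun z => by
          simp only [smul_apply, hext_apply]]
        rw [map_smul, smul_apply, RingHom.id_apply, smul_sub] }
  obtain ⟨z, hz⟩ := hZ (χ.mkContinuous (‖φ‖ + ‖x₀‖) fun f => by
    change ‖φ (ext f) - ext f x₀‖ ≤ _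
    refine (norm_sub_le _ _).trans ?_
    have h1 := φ.le_opNorm (ext f)
    have h2 := (ext f).le_opNorm x₀
    rw [hext_norm] at h1 h2
    linarith)
  refine ⟨x₀ + z, ContinuousLinearMap.ext fun f => ?_⟩
  have h1 : f z = φ (ext (f.comp Z.subtypeL)) - ext (f.comp Z.subtypeL) x₀ :=
    congrArg (fun Ψ => Ψ (f.comp Z.subtypeL)) hz
  rw [hext _ f fun z => hext_apply _ z] at h1
  rw [NormedSpace.dual_def, map_add, h1]
  ring

section

variable {𝕜 X : Type*} [RCLike 𝕜] [NormedAddCommGroup X] [NormedSpace 𝕜 X] {θ : ℝ}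

theorem IsJamesSequence.comp_strictMono {x : ℕ → X} {f : ℕ → StrongDual 𝕜 X}
    (h : IsJamesSequence θ x f) {φ : ℕ → ℕ} (hφ : StrictMono φ) :
    IsJamesSequence θ (x ∘ φ) (f ∘ φ) :=
  ⟨h.pos, fun _ => h.norm_vector_le _, fun _ => h.norm_functional_le _,
    fun _ _ hnk => h.apply_of_le _ _ (hφ.monotone hnk), fun _ _ hkn => h.apply_of_lt _ _ (hφ hkn)⟩

theorem IsJamesSequence.exists_extension {Z : Submodule 𝕜 X} {x : ℕ → Z}
    {f : ℕ → StrongDual 𝕜 Z} (h : IsJamesSequence θ x f) :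
    ∃ g : ℕ → StrongDual 𝕜 X, IsJamesSequence θ (fun n => (x n : X)) g := by
  choose g hg hnorm using fun n => exists_extension_norm_eq Z (f n)
  exact ⟨g, h.pos, h.norm_vector_le, fun n => (hnorm n).trans_le (h.norm_functional_le n),
    fun n k hnk => (hg n _).trans (h.apply_of_le n k hnk),
    fun n k hkn => (hg n _).trans (h.apply_of_lt n k hkn)⟩

/-- The even-indexed vectors of a James sequence span a closed subspace of infinite codimension. -/
theorem IsJamesSequence.sup_ne_top {x : ℕ → X} {f : ℕ → StrongDual 𝕜 X}
    (h : IsJamesSequence θ x f) (F : Submodule 𝕜 X) [FiniteDimensional 𝕜 F] :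
    (Submodule.span 𝕜 (Set.range (x ∘ fun n => 2 * n))).topologicalClosure ⊔ F ≠ ⊤ := by
  set C := (Submodule.span 𝕜 (Set.range (x ∘ fun n => 2 * n))).topologicalClosure
  intro htop
  have hθ : (θ : 𝕜) ≠ 0 := by exact_mod_cast h.pos.ne'
  let g : ℕ → StrongDual 𝕜 X := fun n => f (2 * n + 1) - f (2 * n + 2)
  have hgC : ∀ n, C ≤ (g n).ker := fun n => by
    refine Submodule.topologicalClosure_minimal _ (Submodule.span_le.2 ?_) (g n).isClosed_ker
    rintro _ ⟨k, rfl⟩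
    change f (2 * n + 1) (x (2 * k)) - f (2 * n + 2) (x (2 * k)) = 0
    rcases Nat.lt_or_ge n k with hk | hk
    · rw [h.apply_of_le _ _ (by lia), h.apply_of_le _ _ (by lia), sub_self]
    · rw [h.apply_of_lt _ _ (by lia), h.apply_of_lt _ _ (by lia), sub_self]
  have hgx : ∀ n m, g n (x (2 * m + 1)) = if n = m then (θ : 𝕜) else 0 := fun n m => by
    change f (2 * n + 1) (x (2 * m + 1)) - f (2 * n + 2) (x (2 * m + 1)) = _
    rcases lt_trichotomy n m with hk | rfl | hk
    · rw [h.apply_of_le _ _ (by lia), h.apply_of_le _ _ (by lia), sub_self, if_neg hk.ne]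
    · rw [h.apply_of_le _ _ le_rfl, h.apply_of_lt _ _ (by lia), sub_zero, if_pos rfl]
    · rw [h.apply_of_lt _ _ (by lia), h.apply_of_lt _ _ (by lia), sub_self, if_neg hk.ne']
  have hlin : LinearIndependent 𝕜 fun m => C.mkQ (x (2 * m + 1)) := by
    rw [linearIndependent_iff']
    intro s c hc i hi
    have hmem : ∑ m ∈ s, c m • x (2 * m + 1) ∈ C := by
      rw [← Submodule.Quotient.mk_eq_zero, ← Submodule.mkQ_apply, map_sum]
      simpa only [map_smul] using hc
    have h1 : g i (∑ m ∈ s, c m • x (2 * m + 1)) = 0 := hgC i hmem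
    simp only [map_sum, map_smul, hgx, smul_eq_mul, mul_ite, mul_zero, Finset.sum_ite_eq, hi,
      if_true] at h1
    exact (mul_eq_zero.1 h1).resolve_right hθ
  have hfin : FiniteDimensional 𝕜 (X ⧸ C) := by
    refine Module.Finite.of_surjective (C.mkQ ∘ₗ F.subtype) fun q => ?_
    obtain ⟨y, rfl⟩ := C.mkQ_surjective q
    obtain ⟨a, ha, b, hb, rfl⟩ := Submodule.mem_sup.1 (htop ▸ Submodule.mem_top : y ∈ C ⊔ F)
    refine ⟨⟨b, hb⟩, ?_⟩
    have ha' : C.mkQ a = 0 := by simpa using ha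
    rw [map_add, ha', zero_add]
    rfl
  exact Module.Finite.not_linearIndependent_of_infinite _ hlin

variable [CompleteSpace X]

theorem PropertyB.surjective_of_dense_span (hB : PropertyB 𝕜 X) {s : ℕ → X}
    (hs : Dense (Submodule.span 𝕜 (Set.range s) : Set X)) :
    Function.Surjective (NormedSpace.inclusionInDoubleDual 𝕜 X) := by
  by_contra hrefl
  obtain ⟨θ, x, f, h⟩ := exists_isJamesSequence hrefl
  have hx' := h.comp_strictMono (φ := fun n => 2 * n) fun _ _ _ => by dsimp only; lia
  set C := (Submodule.span 𝕜 (Set.range (x ∘ fun n => 2 * n))).topologicalClosure with hC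
  let F : ℕ → Submodule 𝕜 X := fun n => Submodule.span 𝕜 (s '' Set.Iio n)
  have hF : ∀ n, FiniteDimensional 𝕜 (F n) := fun n =>
    FiniteDimensional.span_of_finite 𝕜 ((Set.finite_Iio n).image s)
  have hmono : Monotone fun n => C ⊔ F n := fun m n hmn =>
    sup_le_sup_left (Submodule.span_mono (Set.image_mono (Set.Iio_subset_Iio hmn))) C
  obtain ⟨φ, hφ⟩ := exists_isNestedSystem_of_monotone hmono
    (fun n => Submodule.isClosed_sup_finiteDimensional _ _
      (Submodule.isClosed_topologicalClosure _))
    (fun n => h.sup_ne_top (F n)) (hs.mono (by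
      rw [← Submodule.coe_iSup_of_directed _ hmono.directed_le, SetLike.coe_subset_coe,
        Submodule.span_le]
      rintro _ ⟨n, rfl⟩
      exact Submodule.mem_iSup_of_mem (n + 1) (Submodule.mem_sup_right
        (Submodule.subset_span ⟨n, Nat.lt_succ_self n, rfl⟩))))
  exact hB.false_of_isJamesSequence hx' hφ fun n => Submodule.mem_sup_left
    (Submodule.le_topologicalClosure _ (Submodule.subset_span ⟨n, rfl⟩))

end

/-- Let `X` be a real or complex Banach space which, if infinite-dimensional, has at least one
strictly increasing sequence of closed subspaces with dense union. If `X` has property (B), then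
`X` is reflexive. -/
theorem stmt_17 {𝕜 X : Type*} [RCLike 𝕜] [NormedAddCommGroup X] [NormedSpace 𝕜 X]
    [CompleteSpace X]
    (hX : ¬ FiniteDimensional 𝕜 X → ∃ Y : ℕ → Submodule 𝕜 X, IsNestedSystem 𝕜 Y)
    (hB : PropertyB 𝕜 X) :
    Function.Surjective (NormedSpace.inclusionInDoubleDual 𝕜 X) := by
  by_cases hfin : FiniteDimensional 𝕜 X
  · exact surjective_inclusionInDoubleDual_of_finiteDimensional 𝕜 X
  obtain ⟨Z, hZ⟩ := hX hfin
  have hZmono : Monotone Z := monotone_nat_of_le_succ fun n => (hZ.lt_succ n).le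
  have hZrefl : ∀ n, Function.Surjective (NormedSpace.inclusionInDoubleDual 𝕜 (Z n)) := by
    intro n
    by_contra hn
    have := (hZ.isClosed n).completeSpace_coe
    obtain ⟨θ, x, f, h⟩ := exists_isJamesSequence hn
    obtain ⟨g, hg⟩ := h.exists_extension
    refine hB.false_of_isJamesSequence hg (Y := fun k => Z (n + k))
      ⟨fun k => hZ.isClosed _, fun k => hZ.lt_succ _, hZ.dense_iUnion.mono ?_⟩ fun k => (x k).2
    exact Set.iUnion_subset fun k => Set.Subset.trans (hZmono (Nat.le_add_left k n))
      (Set.subset_iUnion (fun k => (Z (n + k) : Set X)) k)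
  by_contra hrefl
  obtain ⟨θ, x, f, h⟩ := exists_isJamesSequence hrefl
  let S : Submodule 𝕜 X := Submodule.span 𝕜 (Set.range x)
  let W : ℕ → Submodule 𝕜 X := fun n => (S ⊔ Z n).topologicalClosure
  by_cases hW : ∀ n, W n ≠ ⊤
  · obtain ⟨φ, hφ⟩ := exists_isNestedSystem_of_monotone (W := W)
      (fun m n hmn => Submodule.topologicalClosure_mono (sup_le_sup_left (hZmono hmn) S))
      (fun n => Submodule.isClosed_topologicalClosure _) hW
      (hZ.dense_iUnion.mono (Set.iUnion_mono fun n =>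
        SetLike.coe_subset_coe.2 (le_sup_right.trans (Submodule.le_topologicalClosure (S ⊔ Z n)))))
    exact hB.false_of_isJamesSequence h hφ fun n => Submodule.le_topologicalClosure _
      (Submodule.mem_sup_left (Submodule.subset_span ⟨n, rfl⟩))
  · push Not at hW
    obtain ⟨n, hn⟩ := hW
    have := hZ.isClosed n
    refine hrefl (surjective_inclusionInDoubleDual_of_quotient (Z n) (hZrefl n) ?_)
    refine (hB.quotient (Z n)).surjective_of_dense_span (s := fun k => (Z n).mkQ (x k)) ?_
    have hdense : Dense ((S ⊔ Z n : Submodule 𝕜 X) : Set X) :=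
      (Submodule.dense_iff_topologicalClosure_eq_top).2 hn
    have himage := (Z n).mkQ_surjective.denseRange.dense_image (Z n).mkQL.continuous hdense
    refine himage.mono ?_
    rintro _ ⟨y, hy, rfl⟩
    obtain ⟨a, ha, b, hb, rfl⟩ := Submodule.mem_sup.1 hy
    have hb' : (Z n).mkQ b = 0 := by simpa using hb
    change (Z n).mkQ (a + b) ∈ Submodule.span 𝕜 (Set.range fun k => (Z n).mkQ (x k))
    rw [map_add, hb', add_zero, Set.range_comp' (Z n).mkQ x, ← Submodule.map_span]
    exact Submodule.mem_map_of_mem ha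
end
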